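/- arXiv:2007.02344 — 2 statements merged into one kernel-verified Lean document; each statement's English description precedes it below -/
import Mathlib

section
/- For all natural numbers n, q and k, the k-th iterate of the 5x+1 map satisfies T₅^k(n + 2^k · q) = T₅^k(n) + 5^(k₂(n,k)) · q, where k₂(n,k) is the number of indices j with 0 ≤ j < k such that T₅^j(n) is odd. -/
/-!
The proof is by induction on `k`, for all `q` at once. Since `2 ^ (k + 1) * q = 2 ^ k * (2 * q)`, the
induction hypothesis turns the first `k` steps into a translation by the even number
`2 * (5 ^ k2 n k * q)`. This preserves parity, so the last step takes the same branch of `T5` at both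
points: it halves the translation, and multiplies it by `5` exactly when `T5^[k] n` is odd, which
is also when `k2` increases by one.
-/

/-- The 5x+1 map: T₅(n) = n/2 if n is even, (5n+1)/2 if n is odd. -/
def T5 (n : ℕ) : ℕ := if n % 2 = 0 then n / 2 else (5 * n + 1) / 2

/-- k₂(n,k): the number of indices j < k such that T₅^j(n) is odd. -/
def k2 (n k : ℕ) : ℕ := ((Finset.range k).filter fun j => Odd (T5^[j] n)).card

theorem T5_add_two_mul (m r : ℕ) :
    T5 (m + 2 * r) = T5 m + (if Odd m then 5 else 1) * r := by
  unfold T5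
  simp only [Nat.odd_iff]
  split_ifs <;> omega

theorem k2_succ (n k : ℕ) :
    k2 n (k + 1) = k2 n k + if Odd (T5^[k] n) then 1 else 0 := by
  unfold k2
  rw [Finset.range_add_one, Finset.filter_insert]
  split_ifs <;> simp

/-- T₅^k(n + 2^k·q) = T₅^k(n) + 5^(k₂(n,k))·q. -/
theorem iterate_translation_T5 (n q k : ℕ) :
    T5^[k] (n + 2 ^ k * q) = T5^[k] n + 5 ^ k2 n k * q := by
  induction k generalizing q with
  | zero => simp [k2]
  | succ k ih =>
    have h : n + 2 ^ (k + 1) * q = n + 2 ^ k * (2 * q) := by ring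
    rw [Function.iterate_succ_apply', Function.iterate_succ_apply', h, ih,
      mul_left_comm, T5_add_two_mul, k2_succ]
    split_ifs <;> ring
end

section
/- Let n ≥ 1 and k ≥ 1 be natural numbers. If 5^(k₂(n,k)) > 2^k, then T₅^k(n) > n; and if T₅^k(n) = n, then 5^(k₂(n,k)) < 2^k. Here k₂(n,k) is the number of indices j with 0 ≤ j < k such that T₅^j(n) is odd. -/
theorem five_pow_mul_le (n k : ℕ) : 5 ^ k2 n k * n ≤ 2 ^ k * T5^[k] n := by
  induction k with
  | zero => simp [k2]
  | succ k ih =>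
    rw [k2_succ, Function.iterate_succ_apply', pow_succ 2 k, mul_assoc]
    generalize T5^[k] n = m at *
    split_ifs with h
    · have h2 : 5 * m ≤ 2 * T5 m := by
        rw [Nat.odd_iff] at h
        unfold T5
        split_ifs <;> omega
      calc 5 ^ (k2 n k + 1) * n = 5 * (5 ^ k2 n k * n) := by ring
        _ ≤ 5 * (2 ^ k * m) := by gcongr
        _ = 2 ^ k * (5 * m) := by ring
        _ ≤ 2 ^ k * (2 * T5 m) := by gcongr
    · have h2 : 2 * T5 m = m := by
        rw [Nat.odd_iff] at h
        unfold T5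
        split_ifs <;> omega
      rwa [h2, add_zero]

/-- If 5^(k₂(n,k)) > 2^k then T₅^k(n) > n; and if T₅^k(n) = n then
5^(k₂(n,k)) < 2^k. -/
theorem growth_and_cycle_T5 (n k : ℕ) (hn : 1 ≤ n) (hk : 1 ≤ k) :
    (5 ^ k2 n k > 2 ^ k → T5^[k] n > n) ∧
    (T5^[k] n = n → 5 ^ k2 n k < 2 ^ k) := by
  have key := five_pow_mul_le n k
  constructor
  · intro h
    exact lt_of_mul_lt_mul_left
      ((Nat.mul_lt_mul_of_pos_right h hn).trans_le key) (Nat.zero_le (2 ^ k))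
  · intro h
    rw [h] at key
    refine lt_of_le_of_ne (Nat.le_of_mul_le_mul_right key hn) fun he => ?_
    have h5 : Odd (5 ^ k2 n k) := Odd.pow (by decide)
    have h2 : Even (2 ^ k) := even_two.pow_of_ne_zero (by omega)
    rw [he] at h5
    exact Nat.not_even_iff_odd.mpr h5 h2
end
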